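/- arXiv:2206.05050 — 3 statements merged into one kernel-verified Lean document; each statement's English description precedes it below -/
import Mathlib

section
/- Let V be a finite vertex set with a complete signed graph, color classes V_1,…,V_ℓ ⊆ V, all fairness parameters α_i = 1/2, and let ε > 0. For every fractional assignment x on V satisfying the LP fairness constraints, there exists a partition 𝒞 of V such that every cluster C ∈ 𝒞 with |C| ≥ 2 satisfies |V_i ∩ C| ≤ (1+ε)·|C|/2 for every i ∈ [ℓ], and corr(𝒞) ≤ (4 + 1/ε) · LP(E), where E is the set of all unordered pairs of distinct vertices. -/
open Finset
open scoped Classical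

/-- A fractional assignment (pseudometric valued in `[0,1]`) on the vertex set `V`. -/
structure FracAssign (V : Type*) where
  x : V → V → ℝ
  symm : ∀ u v, x u v = x v u
  diag : ∀ u, x u u = 0
  nonneg : ∀ u v, 0 ≤ x u v
  le_one : ∀ u v, x u v ≤ 1
  triangle : ∀ u v w, x u w ≤ x u v + x v w

variable {V : Type*}

/-- Value of a fractional assignment on an unordered pair. -/
noncomputable def FracAssign.val (f : FracAssign V) : Sym2 V → ℝ :=
  Sym2.lift ⟨f.x, f.symm⟩

/-- LP cost-share of a set `F` of unordered pairs: `x`-value on positive pairs,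
`1 - x` on negative pairs.  `sign e = true` means the pair `e` is positive. -/
noncomputable def LPcost (f : FracAssign V) (sign : Sym2 V → Bool)
    (F : Finset (Sym2 V)) : ℝ :=
  ∑ e ∈ F, if sign e then f.val e else 1 - f.val e

/-- The set of all unordered pairs of distinct vertices. -/
noncomputable def allPairs (V : Type*) [Fintype V] [DecidableEq V] : Finset (Sym2 V) :=
  Finset.univ.filter (fun e : Sym2 V => ¬ e.IsDiag)

/-- `E(S,T)`: unordered pairs of distinct vertices with one endpoint in `S`
and the other in `T`. -/
noncomputable def pairsBetween [Fintype V] [DecidableEq V] (S T : Finset V) :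
    Finset (Sym2 V) :=
  Finset.univ.filter (fun e : Sym2 V =>
    ¬ e.IsDiag ∧ ∃ a b, e = s(a, b) ∧ a ∈ S ∧ b ∈ T)

/-- `E⁺(S,T)`: the positive pairs among `E(S,T)`. -/
noncomputable def Epos [Fintype V] [DecidableEq V] (sign : Sym2 V → Bool)
    (S T : Finset V) : Finset (Sym2 V) :=
  (pairsBetween S T).filter (fun e => sign e)

/-- `E⁻(S,T)`: the negative pairs among `E(S,T)`. -/
noncomputable def Eneg [Fintype V] [DecidableEq V] (sign : Sym2 V → Bool)
    (S T : Finset V) : Finset (Sym2 V) :=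
  (pairsBetween S T).filter (fun e => ¬ sign e)

/-- Both endpoints of the pair `e` lie in a common cluster of `𝒞`. -/
def sameCluster (𝒞 : Finset (Finset V)) (e : Sym2 V) : Prop :=
  ∃ C ∈ 𝒞, ∀ a ∈ e, a ∈ C

/-- Correlation (disagreement) cost of the pairs in `F` w.r.t. the clustering `𝒞`:
negative pairs inside a cluster plus positive pairs across clusters. -/
noncomputable def corrCost (sign : Sym2 V → Bool) (𝒞 : Finset (Finset V))
    (F : Finset (Sym2 V)) : ℕ :=
  (F.filter (fun e => if sign e then ¬ sameCluster 𝒞 e else sameCluster 𝒞 e)).card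

/-- `𝒞` is a partition of `V` into nonempty clusters. -/
def IsPartition [Fintype V] (𝒞 : Finset (Finset V)) : Prop :=
  (∀ C ∈ 𝒞, C.Nonempty) ∧
  (∀ C ∈ 𝒞, ∀ C' ∈ 𝒞, C ≠ C' → Disjoint C C') ∧
  ∀ v : V, ∃ C ∈ 𝒞, v ∈ C

/-- The LP fairness constraints for color classes `Vc` with parameters `α`. -/
def FairLP [Fintype V] (f : FracAssign V) {ℓ : ℕ} (Vc : Fin ℓ → Finset V)
    (α : Fin ℓ → ℝ) : Prop :=
  ∀ u : V, ∀ i : Fin ℓ,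
    ∑ v ∈ Vc i, (1 - f.x u v) ≤ α i * ∑ v : V, (1 - f.x u v)

/-- A `(ρ,σ)`-cluster sequence: each `C j` is the `ρ`-ball (inside the still
uncovered vertices) around its center `u j`, and is `σ`-dense. -/
def ClusterSeq [Fintype V] [DecidableEq V] (f : FracAssign V) (ρ σ : ℝ) {k : ℕ}
    (C : Fin k → Finset V) (u : Fin k → V) : Prop :=
  ∀ j : Fin k,
    (C j).Nonempty ∧
    u j ∈ Finset.univ \ ((Finset.univ.filter (fun i => i < j)).biUnion C) ∧
    C j = (Finset.univ \ ((Finset.univ.filter (fun i => i < j)).biUnion C)).filter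
            (fun v => f.x (u j) v ≤ ρ) ∧
    ∑ v ∈ C j, f.x (u j) v ≤ σ * (C j).card

/-!
Cut out balls `C` of radius `1/2` around vertices `u` for which `1 - x u ·` is `ℓ¹`-close to the
indicator of `C`; when no such vertex is left, the remaining vertices become singletons. Closeness
passes the fractional fairness at `u` on to the cluster `C`. With `γ = 1 / ε`, the disagreements are
paid for by `4 + γ` times the LP cost, except that a vertex `z` that is still unclustered may carry
a debt of `γ (1 - x z v)` for every vertex `v` already cut away. This extra credit is what pays for
the singletons, whose balls fail the closeness condition; it is affordable when a ball is cut out,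
since a separated pair is counted in both orders and so needs only `γ / 2` per order.
-/

section PairSums

variable {M : Type*} [AddCommMonoid M]

lemma sum_sum_mk_eq_two_nsmul_sum_allPairs [Fintype V] [DecidableEq V] {g : Sym2 V → M}
    (hg : ∀ v, g s(v, v) = 0) :
    ∑ z, ∑ v, g s(z, v) = 2 • ∑ e ∈ allPairs V, g e := by
  have hfiber (e : Sym2 V) :
      ∑ p : V × V with s(p.1, p.2) = e, g s(p.1, p.2) = if ¬ e.IsDiag then 2 • g e else 0 := by
    induction e using Sym2.ind with
    | _ a b =>
      have hpre : ({p : V × V | s(p.1, p.2) = s(a, b)} : Finset (V × V)) = {(a, b), (b, a)} := by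
        ext ⟨p, q⟩
        simp
      rw [hpre]
      rcases eq_or_ne a b with rfl | hab
      · simp [hg]
      · rw [sum_pair (by simp [hab]), Sym2.eq_swap (a := b), ← two_nsmul]
        simp [hab]
  calc ∑ z, ∑ v, g s(z, v)
      = ∑ e, ∑ p : V × V with s(p.1, p.2) = e, g s(p.1, p.2) := by
        rw [sum_fiberwise, Fintype.sum_prod_type]
    _ = 2 • ∑ e ∈ allPairs V, g e := by
        simp_rw [hfiber, ← sum_filter, allPairs, smul_sum]

lemma sum_sum_mk_of_subset [DecidableEq V] {S C : Finset V} (hC : C ⊆ S) (g : Sym2 V → M) :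
    ∑ z ∈ S, ∑ v ∈ S, g s(z, v) =
      ∑ z ∈ S \ C, ∑ v ∈ S \ C, g s(z, v) + 2 • ∑ z ∈ S \ C, ∑ v ∈ C, g s(z, v) +
        ∑ z ∈ C, ∑ v ∈ C, g s(z, v) := by
  have hswap : ∑ z ∈ C, ∑ v ∈ S \ C, g s(z, v) = ∑ z ∈ S \ C, ∑ v ∈ C, g s(z, v) := by
    rw [sum_comm]
    simp_rw [Sym2.eq_swap]
  simp_rw [← sum_sdiff hC, sum_add_distrib, hswap]
  abel

end PairSums

section SameCluster

lemma sameCluster_mk {𝒞 : Finset (Finset V)} {a b : V} :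
    sameCluster 𝒞 s(a, b) ↔ ∃ C ∈ 𝒞, a ∈ C ∧ b ∈ C := by
  simp [sameCluster]

variable [DecidableEq V]

lemma sameCluster_insert_mk {𝒞 : Finset (Finset V)} {C : Finset V} {a b : V} :
    sameCluster (insert C 𝒞) s(a, b) ↔ (a ∈ C ∧ b ∈ C) ∨ sameCluster 𝒞 s(a, b) := by
  simp [sameCluster_mk]

lemma sameCluster_parts_mk_right_mem {S : Finset V} {P : Finpartition S} {a b : V}
    (h : sameCluster P.parts s(a, b)) : b ∈ S := by
  obtain ⟨C, hC, -, hb⟩ := sameCluster_mk.1 h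
  exact P.le hC hb

lemma sameCluster_bot_parts_mk {S : Finset V} {a b : V}
    (h : sameCluster (⊥ : Finpartition S).parts s(a, b)) : a = b := by
  obtain ⟨C, hC, ha, hb⟩ := sameCluster_mk.1 h
  obtain ⟨c, -, rfl⟩ := Finpartition.mem_bot_iff.1 hC
  rw [mem_singleton.1 ha, mem_singleton.1 hb]

lemma isPartition_parts [Fintype V] (P : Finpartition (univ : Finset V)) :
    IsPartition P.parts :=
  ⟨fun _ ↦ P.nonempty_of_mem_parts, fun _ hC _ hC' ↦ P.disjoint hC hC',
    fun v ↦ P.exists_mem (mem_univ v)⟩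

end SameCluster

namespace FracAssign

variable {f : FracAssign V} {γ : ℝ} {sign : Sym2 V → Bool} {𝒞 : Finset (Finset V)}
  {C S : Finset V} {u z v : V}

lemma triangle_left (f : FracAssign V) (u z v : V) : f.x z v ≤ f.x u z + f.x u v :=
  f.symm z u ▸ f.triangle z u v

lemma triangle_right (f : FracAssign V) (u z v : V) : f.x u z ≤ f.x u v + f.x z v :=
  f.symm v z ▸ f.triangle u v z

lemma sum_x_nonneg (f : FracAssign V) (u : V) (T : Finset V) : 0 ≤ ∑ v ∈ T, f.x u v :=
  sum_nonneg fun v _ ↦ f.nonneg u v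

lemma sum_one_sub_x_nonneg (f : FracAssign V) (u : V) (T : Finset V) :
    0 ≤ ∑ v ∈ T, (1 - f.x u v) :=
  sum_nonneg fun v _ ↦ sub_nonneg.2 (f.le_one u v)

section Deviation

variable [Fintype V] [DecidableEq V]

/-- The `ℓ¹` distance between `1 - x u ·` and the indicator of `C`: it measures how far the cluster
`C` is from the fractional cluster of `u`. -/
noncomputable def deviation (f : FracAssign V) (u : V) (C : Finset V) : ℝ :=
  ∑ v ∈ C, f.x u v + ∑ v ∈ Cᶜ, (1 - f.x u v)

/-- A cluster `C` is `γ`-tight around `u` if the distances from `u` inside `C` and the deviation of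
`C` from the fractional cluster of `u` are small compared to `#C`; the rounding procedure cuts out a
ball exactly when it is tight. -/
def IsTight (f : FracAssign V) (γ : ℝ) (u : V) (C : Finset V) : Prop :=
  4 * ∑ v ∈ C, f.x u v + γ * f.deviation u C ≤ #C

lemma IsTight.mul_deviation_le (h : f.IsTight γ u C) : γ * f.deviation u C ≤ #C := by
  have := f.sum_x_nonneg u C
  unfold IsTight at h
  linarith

lemma IsTight.sum_nonpos (h : f.IsTight γ u C) (hγ : 0 ≤ γ) :
    ∑ v ∈ C, ((4 + γ) * f.x u v - 1) ≤ 0 := by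
  have := mul_nonneg hγ (f.sum_one_sub_x_nonneg u Cᶜ)
  simp only [sum_sub_distrib, ← mul_sum, sum_const, nsmul_one]
  unfold IsTight deviation at h
  linarith

lemma card_inter_le {A : Finset V} {α : ℝ}
    (hfair : ∑ v ∈ A, (1 - f.x u v) ≤ α * ∑ v, (1 - f.x u v)) (C : Finset V) :
    (#(A ∩ C) : ℝ) ≤ α * #C + max α (1 - α) * f.deviation u C := by
  have hcard (T : Finset V) : ∑ v ∈ T, (1 - f.x u v) = #T - ∑ v ∈ T, f.x u v := by simp
  have hAC : ∑ v ∈ A ∩ C, (1 - f.x u v) ≤ ∑ v ∈ A, (1 - f.x u v) :=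
    sum_le_sum_of_subset_of_nonneg inter_subset_left fun v _ _ ↦ sub_nonneg.2 (f.le_one u v)
  have hC : ∑ v ∈ A ∩ C, f.x u v ≤ ∑ v ∈ C, f.x u v :=
    sum_le_sum_of_subset_of_nonneg inter_subset_right fun v _ _ ↦ f.nonneg u v
  calc (#(A ∩ C) : ℝ)
      ≤ α * ∑ v, (1 - f.x u v) + ∑ v ∈ C, f.x u v := by linarith [hcard (A ∩ C)]
    _ = α * #C + ((1 - α) * ∑ v ∈ C, f.x u v + α * ∑ v ∈ Cᶜ, (1 - f.x u v)) := by
        rw [← sum_add_sum_compl C, hcard]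
        ring
    _ ≤ α * #C + max α (1 - α) * f.deviation u C := by
        rw [deviation, mul_add]
        gcongr
        · exact f.sum_x_nonneg u C
        · exact le_max_right _ _
        · exact f.sum_one_sub_x_nonneg u Cᶜ
        · exact le_max_left _ _

end Deviation

section Excess

/-- The disagreement (`0` or `1`) of the clustering `𝒞` on the pair `e`, minus `4 + γ` times the LP
cost of `e`. -/
noncomputable def excess (f : FracAssign V) (γ : ℝ) (sign : Sym2 V → Bool)
    (𝒞 : Finset (Finset V)) (e : Sym2 V) : ℝ :=
  (if (if sign e then ¬ sameCluster 𝒞 e else sameCluster 𝒞 e) then 1 else 0) -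
    (4 + γ) * if sign e then f.val e else 1 - f.val e

lemma sum_excess (F : Finset (Sym2 V)) :
    ∑ e ∈ F, f.excess γ sign 𝒞 e = corrCost sign 𝒞 F - (4 + γ) * LPcost f sign F := by
  simp only [excess, sum_sub_distrib, ← mul_sum, corrCost, LPcost, card_filter, Nat.cast_sum,
    Nat.cast_ite, Nat.cast_one, Nat.cast_zero]

lemma excess_le_of_sameCluster {B : ℝ} (h : sameCluster 𝒞 s(z, v))
    (hpos : -((4 + γ) * f.x z v) ≤ B) (hneg : 1 - (4 + γ) * (1 - f.x z v) ≤ B) :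
    f.excess γ sign 𝒞 s(z, v) ≤ B := by
  cases hs : sign s(z, v) <;>
    simpa only [excess, val, Sym2.lift_mk, h, hs, if_true, if_false, Bool.false_eq_true,
      not_true_eq_false, not_false_eq_true, zero_sub]

lemma excess_le_of_not_sameCluster {B : ℝ} (h : ¬ sameCluster 𝒞 s(z, v))
    (hpos : 1 - (4 + γ) * f.x z v ≤ B) (hneg : -((4 + γ) * (1 - f.x z v)) ≤ B) :
    f.excess γ sign 𝒞 s(z, v) ≤ B := by
  cases hs : sign s(z, v) <;>
    simpa only [excess, val, Sym2.lift_mk, h, hs, if_true, if_false, Bool.false_eq_true,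
      not_true_eq_false, not_false_eq_true, zero_sub]

lemma excess_le_one_sub (hγ : 0 ≤ γ) (h : f.x z v ≤ 1 / 2) :
    f.excess γ sign 𝒞 s(z, v) ≤ 1 - (4 + γ) * f.x z v := by
  by_cases hsame : sameCluster 𝒞 s(z, v)
  · apply excess_le_of_sameCluster hsame <;> nlinarith
  · apply excess_le_of_not_sameCluster hsame <;> nlinarith

lemma excess_le_neg_mul_one_sub (hγ : 0 ≤ γ) (hsame : ¬ sameCluster 𝒞 s(z, v))
    (h : 1 / 2 ≤ f.x z v) : f.excess γ sign 𝒞 s(z, v) ≤ -(γ * (1 - f.x z v)) := by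
  have := f.le_one z v
  apply excess_le_of_not_sameCluster hsame <;> nlinarith

lemma sum_excess_le_of_not_isTight [Fintype V] [DecidableEq V] (hγ : 0 ≤ γ)
    (hsame : ∀ v, sameCluster 𝒞 s(z, v) → z = v)
    (hz : ¬ f.IsTight γ z {v ∈ S | f.x z v ≤ 1 / 2}) :
    ∑ v ∈ S, f.excess γ sign 𝒞 s(z, v) ≤ γ * ∑ v ∈ Sᶜ, (1 - f.x z v) := by
  set P := {v ∈ S | f.x z v ≤ 1 / 2}
  have hPS : P ⊆ S := filter_subset _ S
  have hnear : ∑ v ∈ P, f.excess γ sign 𝒞 s(z, v) ≤ #P - (4 + γ) * ∑ v ∈ P, f.x z v := by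
    refine (sum_le_sum fun v hv ↦ excess_le_one_sub hγ (mem_filter.1 hv).2).trans_eq ?_
    rw [sum_sub_distrib, sum_const, nsmul_one, mul_sum]
  have hfar : ∑ v ∈ S \ P, f.excess γ sign 𝒞 s(z, v) ≤ -(γ * ∑ v ∈ S \ P, (1 - f.x z v)) := by
    rw [mul_sum, ← sum_neg_distrib]
    refine sum_le_sum fun v hv ↦ ?_
    have hzv : 1 / 2 < f.x z v := by
      by_contra! hle
      exact (mem_sdiff.1 hv).2 (mem_filter.2 ⟨(mem_sdiff.1 hv).1, hle⟩)
    refine excess_le_neg_mul_one_sub hγ (fun h ↦ ?_) hzv.le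
    rw [hsame v h, f.diag] at hzv
    norm_num at hzv
  have hcompl : ∑ v ∈ Pᶜ, (1 - f.x z v) =
      ∑ v ∈ S \ P, (1 - f.x z v) + ∑ v ∈ Sᶜ, (1 - f.x z v) := by
    rw [← sum_sdiff (compl_subset_compl.2 hPS), compl_sdiff_compl]
  rw [IsTight, deviation, hcompl, not_le] at hz
  rw [← sum_sdiff hPS]
  linarith

lemma excess_nonpos_of_near (hγ : 0 ≤ γ) (hsame : sameCluster 𝒞 s(z, v))
    (hz : (4 + γ) * f.x u z ≤ 1) (hv : (4 + γ) * f.x u v ≤ 1) :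
    f.excess γ sign 𝒞 s(z, v) ≤ 0 := by
  have := f.nonneg z v
  have := f.triangle_left u z v
  apply excess_le_of_sameCluster hsame <;> nlinarith

lemma excess_le_of_far (hγ : 0 ≤ γ) (hsame : sameCluster 𝒞 s(z, v)) (hz : f.x u z ≤ 1 / 2)
    (hfar : 1 ≤ (4 + γ) * f.x u z) :
    f.excess γ sign 𝒞 s(z, v) ≤ (4 + γ) * f.x u v - 1 := by
  have := f.triangle_left u z v
  have := f.triangle_right u z v
  apply excess_le_of_sameCluster hsame <;> nlinarith

lemma sum_sum_excess_nonpos (hγ : 0 ≤ γ) (hball : ∀ v ∈ C, f.x u v ≤ 1 / 2)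
    (havg : ∑ v ∈ C, ((4 + γ) * f.x u v - 1) ≤ 0)
    (hsame : ∀ z ∈ C, ∀ v ∈ C, sameCluster 𝒞 s(z, v)) :
    ∑ z ∈ C, ∑ v ∈ C, f.excess γ sign 𝒞 s(z, v) ≤ 0 := by
  let w : V → ℝ := fun v ↦ (4 + γ) * f.x u v - 1
  -- Only vertices far from `u` are charged; a far `z` pays at most `w v` for its pair with `v`.
  let a : V → ℝ := fun v ↦ if 0 < w v then 1 else 0
  have ha (v : V) : 0 ≤ a v := by positivity
  have hpair : ∀ z ∈ C, ∀ v ∈ C, f.excess γ sign 𝒞 s(z, v) ≤ a z * w v + a v * w z := by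
    intro z hz v hv
    wlog hvz : f.x u v ≤ f.x u z generalizing z v
    · rw [Sym2.eq_swap, add_comm]
      exact this v hv z hz (le_of_not_ge hvz)
    have hw : w v ≤ w z := by
      unfold w
      gcongr
    rcases le_or_gt (w z) 0 with hnear | hfar
    · rw [show a z = 0 from if_neg hnear.not_gt, show a v = 0 from if_neg (hw.trans hnear).not_gt,
        zero_mul, zero_mul, add_zero]
      exact excess_nonpos_of_near hγ (hsame z hz v hv) (sub_nonpos.1 hnear)
        (sub_nonpos.1 (hw.trans hnear))
    · rw [show a z = 1 from if_pos hfar, one_mul]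
      exact le_add_of_le_of_nonneg
        (excess_le_of_far hγ (hsame z hz v hv) (hball z hz) (sub_pos.1 hfar).le)
        (mul_nonneg (ha v) hfar.le)
  calc ∑ z ∈ C, ∑ v ∈ C, f.excess γ sign 𝒞 s(z, v)
      ≤ ∑ z ∈ C, ∑ v ∈ C, (a z * w v + a v * w z) :=
        sum_le_sum fun z hz ↦ sum_le_sum fun v hv ↦ hpair z hz v hv
    _ = 2 * ((∑ z ∈ C, a z) * ∑ v ∈ C, w v) := by
        simp_rw [sum_add_distrib, ← sum_mul, ← mul_sum, ← sum_mul]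
        ring
    _ ≤ 0 := mul_nonpos_of_nonneg_of_nonpos two_pos.le
        (mul_nonpos_of_nonneg_of_nonpos (sum_nonneg fun z _ ↦ ha z) havg)

lemma excess_add_le (hγ : 0 ≤ γ) (hsame : ¬ sameCluster 𝒞 s(z, v)) (hz : 1 / 2 ≤ f.x u z)
    (hnear : 1 ≤ (4 + γ / 2) * (1 - f.x u z)) :
    f.excess γ sign 𝒞 s(z, v) + γ / 2 * (1 - f.x z v) ≤ (4 + γ) * f.x u v - 1 := by
  have := f.nonneg z v
  have := f.triangle_left u z v
  have := f.triangle_right u z v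
  rw [← le_sub_iff_add_le]
  apply excess_le_of_not_sameCluster hsame <;> nlinarith

lemma excess_add_nonpos (hγ : 0 ≤ γ) (hsame : ¬ sameCluster 𝒞 s(z, v)) (hv : f.x u v ≤ 1 / 2)
    (hfar : (4 + γ / 2) * (1 - f.x u z) ≤ 1) :
    f.excess γ sign 𝒞 s(z, v) + γ / 2 * (1 - f.x z v) ≤ 0 := by
  have hx : f.x u z - 1 / 2 ≤ f.x z v := by linarith [f.triangle_right u z v]
  have hmul : 1 + γ / 4 ≤ (4 + γ / 2) * f.x z v := by nlinarith
  have hquarter : 1 / 4 ≤ f.x z v := by nlinarith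
  have := f.le_one z v
  rw [← le_sub_iff_add_le]
  apply excess_le_of_not_sameCluster hsame <;> nlinarith

lemma sum_excess_add_nonpos (hγ : 0 ≤ γ) (hball : ∀ v ∈ C, f.x u v ≤ 1 / 2)
    (havg : ∑ v ∈ C, ((4 + γ) * f.x u v - 1) ≤ 0) (hz : 1 / 2 ≤ f.x u z)
    (hsame : ∀ v ∈ C, ¬ sameCluster 𝒞 s(z, v)) :
    ∑ v ∈ C, (f.excess γ sign 𝒞 s(z, v) + γ / 2 * (1 - f.x z v)) ≤ 0 := by
  rcases le_total 1 ((4 + γ / 2) * (1 - f.x u z)) with hnear | hfar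
  · exact (sum_le_sum fun v hv ↦ excess_add_le hγ (hsame v hv) hz hnear).trans havg
  · exact sum_nonpos fun v hv ↦ excess_add_nonpos hγ (hsame v hv) (hball v hv) hfar

end Excess

section Rounding

variable [Fintype V] [DecidableEq V]

lemma sum_sum_compl_sdiff_le (hC : C ⊆ S) :
    ∑ z ∈ S \ C, ∑ v ∈ (S \ C)ᶜ, (1 - f.x z v) ≤
      ∑ z ∈ S, ∑ v ∈ Sᶜ, (1 - f.x z v) + ∑ z ∈ S \ C, ∑ v ∈ C, (1 - f.x z v) := by
  have hCR : C ⊆ (S \ C)ᶜ := by simp [sdiff_eq]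
  have hcompl : (S \ C)ᶜ \ C = Sᶜ := by
    rw [sdiff_eq, ← compl_sup, sup_eq_union, sdiff_union_of_subset hC]
  simp_rw [← sum_sdiff hCR, hcompl, sum_add_distrib]
  gcongr
  · exact fun z _ _ ↦ f.sum_one_sub_x_nonneg z Sᶜ
  · exact sdiff_subset

lemma sum_sum_excess_insert_le (hγ : 0 ≤ γ) (hCS : C ⊆ S) (hball : ∀ v ∈ C, f.x u v ≤ 1 / 2)
    (hout : ∀ z ∈ S \ C, 1 / 2 ≤ f.x u z) (htight : f.IsTight γ u C) (P : Finpartition (S \ C))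
    (hP : ∑ z ∈ S \ C, ∑ v ∈ S \ C, f.excess γ sign P.parts s(z, v) ≤
      γ * ∑ z ∈ S \ C, ∑ v ∈ (S \ C)ᶜ, (1 - f.x z v)) :
    ∑ z ∈ S, ∑ v ∈ S, f.excess γ sign (insert C P.parts) s(z, v) ≤
      γ * ∑ z ∈ S, ∑ v ∈ Sᶜ, (1 - f.x z v) := by
  have havg := htight.sum_nonpos hγ
  have hinner : ∑ z ∈ C, ∑ v ∈ C, f.excess γ sign (insert C P.parts) s(z, v) ≤ 0 :=
    sum_sum_excess_nonpos hγ hball havg fun z hz v hv ↦ sameCluster_insert_mk.2 (.inl ⟨hz, hv⟩)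
  have hcross : ∑ z ∈ S \ C, ∑ v ∈ C, f.excess γ sign (insert C P.parts) s(z, v) +
      γ / 2 * ∑ z ∈ S \ C, ∑ v ∈ C, (1 - f.x z v) ≤ 0 := by
    simp_rw [mul_sum, ← sum_add_distrib]
    refine sum_nonpos fun z hz ↦ sum_excess_add_nonpos hγ hball havg (hout z hz) fun v hv h ↦ ?_
    rcases sameCluster_insert_mk.1 h with ⟨hzC, -⟩ | hzv
    · exact (mem_sdiff.1 hz).2 hzC
    · exact (mem_sdiff.1 (sameCluster_parts_mk_right_mem hzv)).2 hv
  have houter : ∑ z ∈ S \ C, ∑ v ∈ S \ C, f.excess γ sign (insert C P.parts) s(z, v) =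
      ∑ z ∈ S \ C, ∑ v ∈ S \ C, f.excess γ sign P.parts s(z, v) := by
    refine sum_congr rfl fun z hz ↦ sum_congr rfl fun v _ ↦ ?_
    simp only [excess, sameCluster_insert_mk, (mem_sdiff.1 hz).2, false_and, false_or]
  have hdebt := mul_le_mul_of_nonneg_left (sum_sum_compl_sdiff_le (f := f) hCS) hγ
  rw [sum_sum_mk_of_subset hCS, houter, nsmul_eq_mul, Nat.cast_ofNat]
  linarith

lemma exists_finpartition_isTight (f : FracAssign V) (hγ : 0 ≤ γ) (sign : Sym2 V → Bool)
    (S : Finset V) :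
    ∃ P : Finpartition S, (∀ C ∈ P.parts, 2 ≤ #C → ∃ u, f.IsTight γ u C) ∧
      ∑ z ∈ S, ∑ v ∈ S, f.excess γ sign P.parts s(z, v) ≤
        γ * ∑ z ∈ S, ∑ v ∈ Sᶜ, (1 - f.x z v) := by
  induction S using Finset.strongInduction with
  | H S ih =>
  by_cases hS : ∃ u ∈ S, f.IsTight γ u {v ∈ S | f.x u v ≤ 1 / 2}
  · obtain ⟨u, huS, htight⟩ := hS
    set C := {v ∈ S | f.x u v ≤ 1 / 2}
    have hCS : C ⊆ S := filter_subset _ S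
    have hne : C.Nonempty := ⟨u, mem_filter.2 ⟨huS, by simp [f.diag]⟩⟩
    have hball : ∀ v ∈ C, f.x u v ≤ 1 / 2 := fun v hv ↦ (mem_filter.1 hv).2
    have hout : ∀ z ∈ S \ C, 1 / 2 ≤ f.x u z := fun z hz ↦ by
      by_contra! hlt
      exact (mem_sdiff.1 hz).2 (mem_filter.2 ⟨(mem_sdiff.1 hz).1, hlt.le⟩)
    obtain ⟨P, hPtight, hPcost⟩ := ih (S \ C) (sdiff_ssubset hCS hne)
    refine ⟨P.extend hne.ne_empty sdiff_disjoint (sdiff_union_of_subset hCS), ?_,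
      sum_sum_excess_insert_le hγ hCS hball hout htight P hPcost⟩
    rintro D hD hcard
    rcases mem_insert.1 hD with rfl | hDP
    · exact ⟨u, htight⟩
    · exact hPtight D hDP hcard
  · push Not at hS
    refine ⟨⊥, fun C hC hcard ↦ ?_, ?_⟩
    · obtain ⟨a, -, rfl⟩ := Finpartition.mem_bot_iff.1 hC
      simp at hcard
    · rw [mul_sum]
      exact sum_le_sum fun z hz ↦
        sum_excess_le_of_not_isTight hγ (fun v h ↦ sameCluster_bot_parts_mk h) (hS z hz)

lemma exists_isPartition_isTight (f : FracAssign V) (hγ : 0 ≤ γ) (sign : Sym2 V → Bool) :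
    ∃ 𝒞 : Finset (Finset V), IsPartition 𝒞 ∧
      (∀ C ∈ 𝒞, 2 ≤ #C → ∃ u, f.IsTight γ u C) ∧
      (corrCost sign 𝒞 (allPairs V) : ℝ) ≤ (4 + γ) * LPcost f sign (allPairs V) := by
  -- With the diagonal declared positive, sums over ordered pairs see no diagonal terms.
  let sign' : Sym2 V → Bool := fun e ↦ sign e || e.IsDiag
  obtain ⟨P, htight, hcost⟩ := f.exists_finpartition_isTight hγ sign' univ
  refine ⟨P.parts, isPartition_parts P, htight, ?_⟩
  have hdiag (v : V) : f.excess γ sign' P.parts s(v, v) = 0 := by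
    have : sameCluster P.parts s(v, v) := by
      simpa [sameCluster_mk] using P.exists_mem (mem_univ v)
    simp [excess, sign', val, f.diag, this]
  have hsign : ∑ e ∈ allPairs V, f.excess γ sign' P.parts e =
      ∑ e ∈ allPairs V, f.excess γ sign P.parts e := by
    refine sum_congr rfl fun e he ↦ ?_
    simp only [excess, sign', decide_eq_false (mem_filter.1 he).2, Bool.or_false]
  rw [sum_sum_mk_eq_two_nsmul_sum_allPairs hdiag, hsign, sum_excess, compl_univ] at hcost
  simp only [nsmul_eq_mul, Nat.cast_ofNat, sum_empty, sum_const_zero, mul_zero] at hcost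
  linarith

end Rounding

end FracAssign

theorem fair_correlation_clustering_half_general [Fintype V] [DecidableEq V]
    (sign : Sym2 V → Bool) {ℓ : ℕ} (Vc : Fin ℓ → Finset V) (α : Fin ℓ → ℝ) (ε : ℝ) (hε : 0 < ε)
    (f : FracAssign V) (hfair : FairLP f Vc α) :
    ∃ 𝒞 : Finset (Finset V), IsPartition 𝒞 ∧
      (∀ C ∈ 𝒞, 2 ≤ C.card → ∀ i : Fin ℓ,
        ((Vc i ∩ C).card : ℝ) ≤ (α i + ε * max (α i) (1 - α i)) * C.card) ∧
      (corrCost sign 𝒞 (allPairs V) : ℝ) ≤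
        (4 + 1 / ε) * LPcost f sign (allPairs V) := by
  obtain ⟨𝒞, hpart, htight, hcost⟩ := f.exists_isPartition_isTight (one_div_pos.2 hε).le sign
  refine ⟨𝒞, hpart, fun C hC hcard i ↦ ?_, hcost⟩
  obtain ⟨u, hu⟩ := htight C hC hcard
  have hdev : f.deviation u C ≤ ε * C.card := by
    have := hu.mul_deviation_le
    rwa [one_div_mul_eq_div, div_le_iff₀' hε] at this
  have hmax : 0 ≤ max (α i) (1 - α i) := by
    linarith [le_max_left (α i) (1 - α i), le_max_right (α i) (1 - α i)]
  calc ((Vc i ∩ C).card : ℝ)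
      ≤ α i * C.card + max (α i) (1 - α i) * f.deviation u C := f.card_inter_le (hfair u i) C
    _ ≤ α i * C.card + max (α i) (1 - α i) * (ε * C.card) := by gcongr
    _ = (α i + ε * max (α i) (1 - α i)) * C.card := by ring

/-- The special case where every fairness parameter is `1/2`:
a `(4 + 1/ε)`-approximation with `(1+ε)`-fair non-singleton clusters. -/
theorem fair_correlation_clustering_half {V : Type*} [Fintype V] [DecidableEq V]
    (sign : Sym2 V → Bool) {ℓ : ℕ}
    (Vc : Fin ℓ → Finset V)
    (ε : ℝ) (hε : 0 < ε)
    (f : FracAssign V)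
    (hfair : FairLP f Vc (fun _ => (1 : ℝ) / 2)) :
    ∃ 𝒞 : Finset (Finset V), IsPartition 𝒞 ∧
      (∀ C ∈ 𝒞, 2 ≤ C.card → ∀ i : Fin ℓ,
        ((Vc i ∩ C).card : ℝ) ≤ (1 + ε) * C.card / 2) ∧
      (corrCost sign 𝒞 (allPairs V) : ℝ) ≤
        (4 + 1 / ε) * LPcost f sign (allPairs V) := by
  obtain ⟨𝒞, hpart, hcard, hcost⟩ :=
    fair_correlation_clustering_half_general sign Vc _ ε hε f hfair
  exact ⟨𝒞, hpart, fun C hC h i ↦ (hcard C hC h i).trans_eq (by norm_num; ring), hcost⟩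
end

section
/- Let V be a finite vertex set with a complete signed graph, x a fractional assignment on V, and parameters σ, ρ with 0 < σ and 2σ ≤ ρ ≤ 1/2. Let u ∈ V and let T ⊆ {w ∈ V : x(u,w) ≤ ρ} be a nonempty set satisfying the density condition Σ_{w∈T} x(u,w) ≤ σ·|T|. Let v ∈ V ∖ T be a vertex with ρ ≤ x(u,v) ≤ 1 − σ. Then |E⁺(v,T)| ≤ (1/(ρ−σ)) · LP(E(v,T)). -/
open Finset
open scoped Classical

variable {V : Type*}

/-!
By the triangle inequality, a positive pair `{v, w}` costs at least
`x u v - x u w ≥ (ρ - σ) + (σ - x u w)` and a negative one at least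
`1 - x u v - x u w ≥ σ - x u w`. Summed over `w ∈ T`, the terms `σ - x u w` contribute a
nonnegative amount because `T` is `σ`-dense, which leaves `ρ - σ` per positive pair.
-/

lemma sum_erase_le_card_nsmul {ι M : Type*} [DecidableEq ι] [AddCommMonoid M] [PartialOrder M]
    [IsOrderedCancelAddMonoid M] {s : Finset ι} {g : ι → M} {c : M} {i : ι}
    (hs : ∑ j ∈ s, g j ≤ #s • c) (hi : c ≤ g i) :
    ∑ j ∈ s.erase i, g j ≤ #(s.erase i) • c := by
  by_cases his : i ∈ s
  · rw [← add_sum_erase s g his, ← card_erase_add_one his, succ_nsmul'] at hs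
    exact le_of_add_le_add_left (hs.trans' (by gcongr))
  · rwa [erase_eq_of_notMem his]

namespace FracAssign

variable (f : FracAssign V) {u v : V} {σ ρ : ℝ}

lemma x_sub_x_le_x (u v w : V) : f.x u v - f.x u w ≤ f.x v w := by
  rw [sub_le_iff_le_add', f.symm v w]
  exact f.triangle u w v

lemma x_le_x_add_x (u v w : V) : f.x v w ≤ f.x u v + f.x u w := by
  rw [f.symm u v]
  exact f.triangle v u w

lemma ite_sub_x_le_ite_x (w : V) (p : Prop) [Decidable p]
    (hv1 : ρ ≤ f.x u v) (hv2 : f.x u v ≤ 1 - σ) :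
    (if p then ρ else σ) - f.x u w ≤ if p then f.x v w else 1 - f.x v w := by
  split_ifs
  · linarith [f.x_sub_x_le_x u v w]
  · linarith [f.x_le_x_add_x u v w]

lemma sub_mul_card_filter_le_sum_ite_x {S : Finset V} (p : V → Prop) [DecidablePred p]
    (hdense : ∑ w ∈ S, f.x u w ≤ #S • σ)
    (hv1 : ρ ≤ f.x u v) (hv2 : f.x u v ≤ 1 - σ) :
    (ρ - σ) * #{w ∈ S | p w} ≤ ∑ w ∈ S, if p w then f.x v w else 1 - f.x v w :=
  calc (ρ - σ) * #{w ∈ S | p w}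
      = ∑ w ∈ S, (if p w then ρ else σ) - #S • σ := by
        rw [← sum_const, ← sum_sub_distrib, mul_comm, ← nsmul_eq_mul, ← sum_const, sum_filter]
        exact sum_congr rfl fun w _ ↦ by split_ifs <;> simp
    _ ≤ ∑ w ∈ S, (if p w then ρ else σ) - ∑ w ∈ S, f.x u w := by gcongr
    _ = ∑ w ∈ S, ((if p w then ρ else σ) - f.x u w) := (sum_sub_distrib ..).symm
    _ ≤ ∑ w ∈ S, if p w then f.x v w else 1 - f.x v w :=
        sum_le_sum fun w _ ↦ f.ite_sub_x_le_ite_x w (p w) hv1 hv2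

end FracAssign

section Star

variable [Fintype V] [DecidableEq V] (sign : Sym2 V → Bool) (v : V) (T : Finset V)

lemma pairsBetween_singleton_left :
    pairsBetween {v} T = (T.erase v).map (Sym2.mkEmbedding v) := by
  ext e
  simp only [pairsBetween, mem_filter_univ, mem_singleton, mem_map, mem_erase,
    Sym2.mkEmbedding_apply]
  constructor
  · rintro ⟨hdiag, _, w, rfl, rfl, hw⟩
    exact ⟨w, ⟨fun h ↦ hdiag (Sym2.mk_isDiag_iff.2 h.symm), hw⟩, rfl⟩
  · rintro ⟨w, ⟨hwv, hw⟩, rfl⟩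
    exact ⟨fun h ↦ hwv (Sym2.mk_isDiag_iff.1 h).symm, v, w, rfl, rfl, hw⟩

lemma card_Epos_singleton_left :
    #(Epos sign {v} T) = #{w ∈ T.erase v | sign s(v, w)} := by
  rw [Epos, pairsBetween_singleton_left, filter_map, card_map]
  rfl

lemma LPcost_pairsBetween_singleton_left (f : FracAssign V) :
    LPcost f sign (pairsBetween {v} T)
      = ∑ w ∈ T.erase v, if sign s(v, w) then f.x v w else 1 - f.x v w := by
  rw [LPcost, pairsBetween_singleton_left, sum_map]
  rfl

end Star

theorem near_positive_edges_general [Fintype V] [DecidableEq V]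
    (sign : Sym2 V → Bool) (f : FracAssign V) {σ ρ : ℝ} (hσρ : σ < ρ)
    {u v : V} {T : Finset V} (hdense : ∑ w ∈ T, f.x u w ≤ σ * #T)
    (hv1 : ρ ≤ f.x u v) (hv2 : f.x u v ≤ 1 - σ) :
    (#(Epos sign {v} T) : ℝ) ≤ (1 / (ρ - σ)) * LPcost f sign (pairsBetween {v} T) := by
  rw [mul_comm, ← nsmul_eq_mul] at hdense
  -- The pair `{v, v}` is not an edge; dropping `v` from `T` only makes `T` denser around `u`.
  have hdense' : ∑ w ∈ T.erase v, f.x u w ≤ #(T.erase v) • σ :=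
    sum_erase_le_card_nsmul hdense (hσρ.le.trans hv1)
  rw [one_div_mul_eq_div, le_div_iff₀' (sub_pos.2 hσρ), card_Epos_singleton_left,
    LPcost_pairsBetween_singleton_left]
  exact f.sub_mul_card_filter_le_sum_ite_x _ hdense' hv1 hv2

/-- Lemma: near positive crossing edges.  If `T` is a dense
`ρ`-ball around `u` and `v ∉ T` with `ρ ≤ x u v ≤ 1 - σ`, then
`|E⁺(v,T)| ≤ (1/(ρ-σ)) · LP(E(v,T))`. -/
theorem near_positive_edges {V : Type*} [Fintype V] [DecidableEq V]
    (sign : Sym2 V → Bool) (f : FracAssign V)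
    (σ ρ : ℝ) (hσ : 0 < σ) (hρ1 : 2 * σ ≤ ρ) (hρ2 : ρ ≤ 1 / 2)
    (u : V) (T : Finset V) (hTne : T.Nonempty)
    (hT : ∀ w ∈ T, f.x u w ≤ ρ)
    (hdense : ∑ w ∈ T, f.x u w ≤ σ * T.card)
    (v : V) (hvT : v ∉ T) (hv1 : ρ ≤ f.x u v) (hv2 : f.x u v ≤ 1 - σ) :
    ((Epos sign {v} T).card : ℝ) ≤
      (1 / (ρ - σ)) * LPcost f sign (pairsBetween {v} T) :=
  near_positive_edges_general sign f (by linarith) hdense hv1 hv2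
end

section
/- Let V be a finite vertex set with a complete signed graph, x a fractional assignment on V, and 0 ≤ ρ < 1. Let u ∈ V and let N be a set of negative pairs {v,w} such that x(u,v) ≤ ρ/2 and x(u,w) ≤ ρ/2. Then |N| ≤ (1/(1−ρ)) · LP(N). -/
open Finset
open scoped Classical

variable {V : Type*}

namespace FracAssign

@[simp]
theorem val_mk (f : FracAssign V) (v w : V) : f.val s(v, w) = f.x v w := rfl

theorem val_le_two_mul {f : FracAssign V} {u : V} {r : ℝ} {e : Sym2 V}
    (hr : ∀ v ∈ e, f.x u v ≤ r) : f.val e ≤ 2 * r := by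
  induction e using Sym2.ind with
  | _ v w =>
    calc f.val s(v, w) = f.x v w := f.val_mk v w
      _ ≤ f.x v u + f.x u w := f.triangle v u w
      _ = f.x u v + f.x u w := by rw [f.symm v u]
      _ ≤ r + r := add_le_add (hr v (Sym2.mem_mk_left v w)) (hr w (Sym2.mem_mk_right v w))
      _ = 2 * r := (two_mul r).symm

end FracAssign

theorem LPcost_eq_sum_one_sub (f : FracAssign V) {sign : Sym2 V → Bool} {F : Finset (Sym2 V)}
    (hneg : ∀ e ∈ F, sign e = false) : LPcost f sign F = ∑ e ∈ F, (1 - f.val e) :=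
  sum_congr rfl fun e he => by simp [hneg e he]

theorem card_mul_one_sub_le_LPcost {f : FracAssign V} {sign : Sym2 V → Bool}
    {F : Finset (Sym2 V)} {ρ : ℝ} (hneg : ∀ e ∈ F, sign e = false)
    (hval : ∀ e ∈ F, f.val e ≤ ρ) : #F * (1 - ρ) ≤ LPcost f sign F := by
  rw [LPcost_eq_sum_one_sub f hneg, ← nsmul_eq_mul]
  exact card_nsmul_le_sum F _ _ fun e he => sub_le_sub_left (hval e he) 1

theorem short_negative_edges_general (sign : Sym2 V → Bool) (f : FracAssign V) {ρ : ℝ}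
    (hρ : ρ < 1) (u : V) (N : Finset (Sym2 V)) (hneg : ∀ e ∈ N, sign e = false)
    (hclose : ∀ e ∈ N, ∀ v ∈ e, f.x u v ≤ ρ / 2) :
    (#N : ℝ) ≤ 1 / (1 - ρ) * LPcost f sign N := by
  have hval : ∀ e ∈ N, f.val e ≤ ρ := fun e he =>
    (FracAssign.val_le_two_mul (hclose e he)).trans_eq (mul_div_cancel₀ ρ two_ne_zero)
  rw [one_div_mul_eq_div, le_div_iff₀ (sub_pos.mpr hρ)]
  exact card_mul_one_sub_le_LPcost hneg hval

/-- Lemma: short negative edges.  Negative pairs whose two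
endpoints are both within distance `ρ/2` of `u` number at most
`(1/(1-ρ)) · LP(N)`. -/
theorem short_negative_edges {V : Type*} [Fintype V] [DecidableEq V]
    (sign : Sym2 V → Bool) (f : FracAssign V)
    (ρ : ℝ) (hρ0 : 0 ≤ ρ) (hρ1 : ρ < 1)
    (u : V) (N : Finset (Sym2 V))
    (hNneg : ∀ e ∈ N, ¬ e.IsDiag ∧ sign e = false)
    (hNclose : ∀ e ∈ N, ∀ a ∈ e, f.x u a ≤ ρ / 2) :
    (N.card : ℝ) ≤ (1 / (1 - ρ)) * LPcost f sign N :=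
  short_negative_edges_general sign f hρ1 u N (fun e he => (hNneg e he).2) hNclose
end
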